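/- Let f : ℂⁿ → ℂ be a mixed polynomial with supp(f) ≠ ∅ that is radial weighted-homogeneous and Newton strongly non-degenerate. Then S(f) ∪ f(Sing f) ⊆ {0}. -/

import Mathlib

open Complex Filter Finset

noncomputable section

abbrev MixedCoeff (n : ℕ) := ((Fin n → ℕ) × (Fin n → ℕ)) →₀ ℂ

namespace Mixed

variable {n : ℕ}

/-- Evaluation of a mixed polynomial given by its coefficient function `c`:
`f(z) = Σ c(ν,μ) zᵛ z̄ᵘ`. -/
def eval (c : MixedCoeff n) (z : Fin n → ℂ) : ℂ :=
  c.sum fun p a => a * (∏ i, z i ^ p.1 i) * ∏ i, (starRingEnd ℂ) (z i) ^ p.2 i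

/-- `∂f/∂z_i` evaluated at `(z, z̄)`. -/
def dz (c : MixedCoeff n) (i : Fin n) (z : Fin n → ℂ) : ℂ :=
  c.sum fun p a => a * (p.1 i) * (∏ j, z j ^ (p.1 j - if j = i then 1 else 0)) *
    ∏ j, (starRingEnd ℂ) (z j) ^ p.2 j

/-- `∂f/∂z̄_i` evaluated at `(z, z̄)`. -/
def dzbar (c : MixedCoeff n) (i : Fin n) (z : Fin n → ℂ) : ℂ :=
  c.sum fun p a => a * (p.2 i) * (∏ j, z j ^ p.1 j) *
    ∏ j, (starRingEnd ℂ) (z j) ^ (p.2 j - if j = i then 1 else 0)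

/-- The singular locus of `f` as a real map `ℝ²ⁿ → ℝ²`. -/
def Sing (c : MixedCoeff n) : Set (Fin n → ℂ) :=
  {z | ¬ Function.Surjective ⇑(fderiv ℝ (eval c) z)}

/-- The Milnor set `M(f)`. -/
def Milnor (c : MixedCoeff n) : Set (Fin n → ℂ) :=
  {z | ∃ (l : ℝ) (m : ℂ), m ≠ 0 ∧
    ∀ i, (l : ℂ) * z i = m * (starRingEnd ℂ) (dz c i z) + (starRingEnd ℂ) m * dzbar c i z}

/-- The set `S(f)` of asymptotic ρ-nonregular values. -/
def Sset (c : MixedCoeff n) : Set ℂ :=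
  {v | ∃ zk : ℕ → (Fin n → ℂ), (∀ k, zk k ∈ Milnor c) ∧
    Tendsto (fun k => ‖zk k‖) atTop atTop ∧
    Tendsto (fun k => eval c (zk k)) atTop (nhds v)}

/-- The point of `ℝⁿ` attached to the exponent pair `(ν,μ)`, namely `ν+μ`. -/
def suppPt (p : (Fin n → ℕ) × (Fin n → ℕ)) : Fin n → ℝ := fun i => ((p.1 i + p.2 i : ℕ) : ℝ)

/-- The support of `f`, as a subset of `ℝⁿ`. -/
def suppPts (c : MixedCoeff n) : Set (Fin n → ℝ) := suppPt '' (c.support : Set _)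

/-- The Newton polyhedron `Γ₀(f)`: convex hull of `{0} ∪ supp(f)`. -/
def Gamma0 (c : MixedCoeff n) : Set (Fin n → ℝ) := convexHull ℝ (insert 0 (suppPts c))

/-- `supp(f)‾`: the convex hull of `supp(f) \ {0}`. -/
def suppBar (c : MixedCoeff n) : Set (Fin n → ℝ) := convexHull ℝ (suppPts c \ {0})

/-- `F` is a face of the (compact convex) set `C`: either `C` itself or the set of
minimizers on `C` of a linear functional, and nonempty. -/
def IsFaceOf (C F : Set (Fin n → ℝ)) : Prop :=
  F.Nonempty ∧ (F = C ∨ ∃ a : Fin n → ℝ,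
    F = {x ∈ C | ∀ y ∈ C, ∑ i, a i * x i ≤ ∑ i, a i * y i})

/-- `Δ` is a face of the Newton boundary at infinity `Γ⁺(f)`: a face of `Γ₀(f)` not
containing the origin. -/
def IsGammaPlusFace (c : MixedCoeff n) (Δ : Set (Fin n → ℝ)) : Prop :=
  IsFaceOf (Gamma0 c) Δ ∧ (0 : Fin n → ℝ) ∉ Δ

/-- `Γ⁺(f)` as a subset of `ℝⁿ`: the union of the faces of `Γ₀(f)` not containing `0`. -/
def GammaPlusSet (c : MixedCoeff n) : Set (Fin n → ℝ) :=
  {x | ∃ Δ, IsGammaPlusFace c Δ ∧ x ∈ Δ}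

/-- The truncation `f_Δ` of `f` to a subset `Δ ⊆ ℝⁿ`. -/
def trunc (c : MixedCoeff n) (Δ : Set (Fin n → ℝ)) : MixedCoeff n :=
  @Finsupp.filter _ _ _ (fun p => suppPt p ∈ Δ) (Classical.decPred _) c

/-- Newton non-degeneracy: for every face `Δ` of `Γ⁺(f)`,
`Sing f_Δ ∩ f_Δ⁻¹(0) ∩ (ℂ*)ⁿ = ∅`. -/
def NewtonNonDeg (c : MixedCoeff n) : Prop :=
  ∀ Δ, IsGammaPlusFace c Δ → ∀ z : Fin n → ℂ, (∀ i, z i ≠ 0) →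
    eval (trunc c Δ) z = 0 → z ∉ Sing (trunc c Δ)

/-- Newton strong non-degeneracy: for every face `Δ` of `Γ⁺(f)`,
`Sing f_Δ ∩ (ℂ*)ⁿ = ∅`. -/
def NewtonStronglyNonDeg (c : MixedCoeff n) : Prop :=
  ∀ Δ, IsGammaPlusFace c Δ → ∀ z : Fin n → ℂ, (∀ i, z i ≠ 0) →
    z ∉ Sing (trunc c Δ)

/-- `Δ` is a bad face of `supp(f)‾`. -/
def IsBadFace (c : MixedCoeff n) (Δ : Set (Fin n → ℝ)) : Prop :=
  IsFaceOf (suppBar c) Δ ∧ (0 : Fin n → ℝ) ∈ affineSpan ℝ Δ ∧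
    ∃ a : Fin n → ℝ, (∃ i, a i < 0) ∧ (∃ j, 0 < a j) ∧
      {x ∈ suppBar c | ∑ i, a i * x i = 0} = Δ

/-- `f` depends effectively on all its variables. -/
def EffectiveAll (c : MixedCoeff n) : Prop :=
  ∀ i, ∃ p ∈ c.support, 0 < p.1 i + p.2 i

/-- The Euclidean norm on `ℂⁿ`. -/
def norm2 (v : Fin n → ℂ) : ℝ := Real.sqrt (∑ i, Complex.normSq (v i))

end Mixed

/-- `f` is radial weighted-homogeneous of some degree `m` with positive weights `q`,
`gcd(q₁,…,qₙ) = 1`. -/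
def RadialWeightedHom {n : ℕ} (c : MixedCoeff n) : Prop :=
  ∃ (q : Fin n → ℕ) (m : ℕ), (∀ i, 0 < q i) ∧ Finset.univ.gcd q = 1 ∧ 0 < m ∧
    ∀ p ∈ c.support, ∑ i, q i * (p.1 i + p.2 i) = m

/-!
Write `M(z)` for the vector of values at `z` of the monomials occurring in `f`, and `g(m, z)` for
the real gradient of `Re (conj m · f)` in logarithmic coordinates, with components
`conj zᵢ · (m conj(∂f/∂zᵢ) + conj m ∂f/∂z̄ᵢ)`; it is real-linear in `M(z)`. The heart of the proof
is an estimate `‖g(m, z)‖ ≥ C ‖m‖ ‖M(z)‖`. Both sides are homogeneous, and weighted homogeneity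
makes the closure of the set of all `M(z)` stable under positive scaling, so it is enough that `g`
does not vanish at nonzero points of this closure. Such a point consists of the monomial values, at
some point of the torus, of a truncation `f_Δ` with `Δ` a face of `Γ⁺(f)`, and a zero of `g` would
be a singular point of `f_Δ`.

At a singular point of `f` the estimate gives `M(z) = 0`, hence `f(z) = 0`. At a point of the Milnor
set, `g(m, z)ᵢ = λ |zᵢ|²`, and pairing `g` with the vector of the `log |zᵢ|` gives
`λ Σ |zᵢ|² log |zᵢ| = Σ_p log |M_p| · Re (conj m c_p M_p)`, whose right-hand side is at most
`‖m‖ (L ‖M‖ + |log ‖M‖| |f(z)|)` in absolute value, with `L = Σ |c_p|`. The left-hand side is of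
size about `|λ| ‖z‖² log ‖z‖`, which by the estimate is at least about `C ‖m‖ ‖M‖ log ‖z‖`; so
`log ‖z‖` stays bounded as long as `f(z)` stays bounded and away from `0`.
-/

namespace Mixed

open scoped ComplexConjugate

variable {n : ℕ}

/-- The pair `(ν, μ)` of exponents of a mixed monomial `zᵛ z̄ᵘ`. -/
abbrev BiExponent (n : ℕ) := (Fin n → ℕ) × (Fin n → ℕ)

/-- The mixed monomial `zᵛ z̄ᵘ` with exponents `p = (ν, μ)`. -/
def monomial (p : BiExponent n) (z : Fin n → ℂ) : ℂ :=
  (∏ i, z i ^ p.1 i) * ∏ i, conj (z i) ^ p.2 i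

lemma eval_eq_sum (c : MixedCoeff n) (z : Fin n → ℂ) :
    eval c z = ∑ p : c.support, c p * monomial p z := by
  rw [sum_coe_sort c.support fun p => c p * monomial p z]
  simp only [eval, Finsupp.sum, monomial, mul_assoc]

@[fun_prop]
lemma continuous_monomial (p : BiExponent n) : Continuous (monomial p) := by
  unfold monomial
  fun_prop

lemma norm_monomial (p : BiExponent n) (z : Fin n → ℂ) :
    ‖monomial p z‖ = ∏ i, ‖z i‖ ^ (p.1 i + p.2 i) := by
  simp only [monomial, norm_mul, norm_prod, norm_pow, RCLike.norm_conj, pow_add, prod_mul_distrib]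

lemma log_norm_monomial {p : BiExponent n} {z : Fin n → ℂ} (h : monomial p z ≠ 0) :
    Real.log ‖monomial p z‖ = (fun i => Real.log ‖z i‖) ⬝ᵥ suppPt p := by
  rw [← norm_ne_zero_iff, norm_monomial] at h
  rw [norm_monomial, Real.log_prod (prod_ne_zero_iff.1 h)]
  simp only [Real.log_pow, dotProduct, suppPt, mul_comm]

lemma monomial_exp_mul (p : BiExponent n) (w : Fin n → ℝ) (z : Fin n → ℂ) :
    monomial p (fun i => (Real.exp (w i) : ℂ) * z i) =
      (Real.exp (w ⬝ᵥ suppPt p) : ℂ) * monomial p z := by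
  have hexp : Real.exp (w ⬝ᵥ suppPt p) =
      (∏ i, Real.exp (w i) ^ p.1 i) * ∏ i, Real.exp (w i) ^ p.2 i := by
    simp only [dotProduct, suppPt, Real.exp_sum, ← prod_mul_distrib, ← Real.exp_nat_mul,
      ← Real.exp_add, Nat.cast_add, mul_add, mul_comm]
  rw [hexp]
  simp only [monomial, map_mul, conj_ofReal, mul_pow, prod_mul_distrib]
  push_cast
  ring

/-! ### Derivatives of mixed polynomials -/

lemma prod_pow_sub_single {κ R : Type*} [Fintype κ] [DecidableEq κ] [CommMonoid R] (x : κ → R)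
    (e : κ → ℕ) (i : κ) :
    ∏ j, x j ^ (e j - if j = i then 1 else 0) =
      (∏ j ∈ univ.erase i, x j ^ e j) * x i ^ (e i - 1) := by
  rw [← prod_erase_mul _ _ (mem_univ i), if_pos rfl]
  congr 1
  refine prod_congr rfl fun j hj => ?_
  rw [if_neg (ne_of_mem_erase hj), Nat.sub_zero]

lemma natCast_mul_mul_prod_pow_sub_single {κ R : Type*} [Fintype κ] [DecidableEq κ]
    [CommSemiring R] (x : κ → R) (e : κ → ℕ) (i : κ) :
    (e i : R) * (x i * ∏ j, x j ^ (e j - if j = i then 1 else 0)) = e i * ∏ j, x j ^ e j := by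
  rw [prod_pow_sub_single, ← prod_erase_mul _ _ (mem_univ i)]
  rcases e i with - | k
  · simp
  · rw [Nat.add_sub_cancel, pow_succ]
    ring

lemma mul_dz (c : MixedCoeff n) (z : Fin n → ℂ) (i : Fin n) :
    z i * dz c i z = c.sum fun p a => p.1 i * (a * monomial p z) := by
  simp only [dz, Finsupp.sum, mul_sum]
  refine sum_congr rfl fun p _ => ?_
  unfold monomial
  linear_combination (c p * ∏ j, conj (z j) ^ p.2 j) * natCast_mul_mul_prod_pow_sub_single z p.1 i

lemma conj_mul_dzbar (c : MixedCoeff n) (z : Fin n → ℂ) (i : Fin n) :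
    conj (z i) * dzbar c i z = c.sum fun p a => p.2 i * (a * monomial p z) := by
  simp only [dzbar, Finsupp.sum, mul_sum]
  refine sum_congr rfl fun p _ => ?_
  unfold monomial
  linear_combination (c p * ∏ j, z j ^ p.1 j) *
    natCast_mul_mul_prod_pow_sub_single (fun j => conj (z j)) p.2 i

lemma hasFDerivAt_prod_pow {κ 𝕜 𝔸 E : Type*} [Fintype κ] [DecidableEq κ]
    [NontriviallyNormedField 𝕜] [NormedCommRing 𝔸] [NormedAlgebra 𝕜 𝔸] [NormedAddCommGroup E]
    [NormedSpace 𝕜 E] {g : κ → E → 𝔸} {g' : κ → E →L[𝕜] 𝔸} {x : E}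
    (hg : ∀ i, HasFDerivAt (g i) (g' i) x) (e : κ → ℕ) :
    HasFDerivAt (fun y => ∏ i, g i y ^ e i)
      (∑ i, (e i * ∏ j, g j x ^ (e j - if j = i then 1 else 0)) • g' i) x := by
  refine (HasFDerivAt.finsetProd (u := univ) fun i _ => (hg i).pow (e i)).congr_fderiv ?_
  refine sum_congr rfl fun i _ => ?_
  rw [prod_pow_sub_single fun j => g j x, smul_smul]
  congr 1
  rw [nsmul_eq_mul]
  ring

lemma hasFDerivAt_eval (c : MixedCoeff n) (z : Fin n → ℂ) :
    HasFDerivAt (eval c) (∑ i, (dz c i z • ContinuousLinearMap.proj (R := ℝ) i +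
      dzbar c i z • (conjCLE : ℂ →L[ℝ] ℂ).comp (ContinuousLinearMap.proj i))) z := by
  have hproj (i : Fin n) : HasFDerivAt (fun y : Fin n → ℂ => y i)
      (ContinuousLinearMap.proj (R := ℝ) i) z := hasFDerivAt_apply i z
  have hconj (i : Fin n) : HasFDerivAt (fun y : Fin n → ℂ => conj (y i))
      ((conjCLE : ℂ →L[ℝ] ℂ).comp (ContinuousLinearMap.proj i)) z :=
    conjCLE.hasFDerivAt.comp z (hproj i)
  have hterm (p : BiExponent n) := ((hasFDerivAt_prod_pow hproj p.1).const_mul (c p)).mul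
    (hasFDerivAt_prod_pow hconj p.2)
  refine (HasFDerivAt.fun_sum (u := c.support) fun p _ => hterm p).congr_fderiv ?_
  ext v
  simp only [dz, dzbar, Finsupp.sum, _root_.sum_apply, add_apply, smul_apply, smul_eq_mul,
    sum_add_distrib, sum_mul, mul_sum]
  rw [add_comm, sum_comm, sum_comm (s := c.support)]
  congr 1 <;> refine sum_congr rfl fun i _ => sum_congr rfl fun p _ => ?_ <;> ring

lemma not_surjective_iff_exists_inner_eq_zero {𝕜 V W : Type*} [RCLike 𝕜]
    [AddCommGroup V] [Module 𝕜 V] [NormedAddCommGroup W] [InnerProductSpace 𝕜 W]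
    [FiniteDimensional 𝕜 W] (L : V →ₗ[𝕜] W) :
    ¬ Function.Surjective L ↔ ∃ m ≠ 0, ∀ v, inner 𝕜 m (L v) = 0 := by
  rw [← LinearMap.range_eq_top, ← Submodule.orthogonal_eq_bot_iff, ← ne_eq,
    Submodule.ne_bot_iff]
  simp [Submodule.mem_orthogonal', and_comm]

/-- The vector `m·conj(df) + conj(m)·∂̄f`: the real gradient of `Re (conj m · f)`, which governs
both `Sing f` and `M(f)`. -/
def reGrad (c : MixedCoeff n) (m : ℂ) (z : Fin n → ℂ) (i : Fin n) : ℂ :=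
  m * conj (dz c i z) + conj m * dzbar c i z

lemma inner_fderiv_eval (c : MixedCoeff n) (m : ℂ) (z v : Fin n → ℂ) :
    inner ℝ m (fderiv ℝ (eval c) z v) = (∑ i, conj (v i) * reGrad c m z i).re := by
  rw [(hasFDerivAt_eval c z).fderiv, Complex.inner]
  simp only [_root_.sum_apply, sum_mul, re_sum]
  refine sum_congr rfl fun i _ => ?_
  simp only [add_apply, smul_apply, ContinuousLinearMap.proj_apply, smul_eq_mul,
    ContinuousLinearMap.comp_apply, ContinuousLinearEquiv.coe_coe, ContinuousAlgEquiv.coeCLE_apply,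
    conjCAE_apply, mul_re, add_re, conj_re, conj_im, mul_neg, sub_neg_eq_add, add_im, mul_im,
    reGrad, neg_mul]
  ring

lemma mem_Sing_iff {c : MixedCoeff n} {z : Fin n → ℂ} :
    z ∈ Sing c ↔ ∃ m ≠ 0, ∀ i, reGrad c m z i = 0 := by
  refine (not_surjective_iff_exists_inner_eq_zero
    (fderiv ℝ (eval c) z : (Fin n → ℂ) →ₗ[ℝ] ℂ)).trans (exists_congr fun m => and_congr_right
      fun _ => ⟨fun h i => ?_, fun h v => ?_⟩)
  · have hi : (∑ j, conj ((Pi.single i (reGrad c m z i) : Fin n → ℂ) j) * reGrad c m z j).re = 0 :=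
      (inner_fderiv_eval c m z _).symm.trans (h _)
    rw [sum_eq_single i (fun j _ hj => by simp [hj]) (by simp), Pi.single_eq_same,
      ← normSq_eq_conj_mul_self, ofReal_re] at hi
    exact normSq_eq_zero.1 hi
  · simp only [ContinuousLinearMap.coe_coe, inner_fderiv_eval, h, mul_zero, sum_const_zero, zero_re]

/-! ### Logarithmic gradients -/

variable {S : Finset (BiExponent n)}

/-- The real gradient of `Re (conj m · f)` in logarithmic coordinates, as a function of the vector
`s` of values of the monomials in `S`; it is real-linear in `s`, see `conj_mul_reGrad`. -/
def logGrad (c : MixedCoeff n) (m : ℂ) (s : S → ℂ) (i : Fin n) : ℂ :=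
  ∑ p : S, (p.1.1 i * conj (conj m * (c p * s p)) + p.1.2 i * (conj m * (c p * s p)))

lemma conj_mul_reGrad {c : MixedCoeff n} (hS : c.support ⊆ S) (m : ℂ) (z : Fin n → ℂ)
    (i : Fin n) :
    conj (z i) * reGrad c m z i = logGrad c m (fun p : S => monomial p z) i := by
  have hdz := mul_dz c z i
  have hdzbar := conj_mul_dzbar c z i
  rw [Finsupp.sum_of_support_subset c hS _ (by simp)] at hdz hdzbar
  calc conj (z i) * reGrad c m z i
      = m * conj (z i * dz c i z) + conj m * (conj (z i) * dzbar c i z) := by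
        rw [reGrad, map_mul]
        ring
    _ = logGrad c m (fun p : S => monomial p z) i := by
        rw [hdz, hdzbar, map_sum, mul_sum, mul_sum, ← sum_add_distrib, ← sum_coe_sort]
        refine sum_congr rfl fun p _ => ?_
        simp only [map_mul, map_natCast, conj_conj]
        ring

lemma continuous_logGrad (c : MixedCoeff n) :
    Continuous fun ms : ℂ × (S → ℂ) => logGrad c ms.1 ms.2 := by
  unfold logGrad
  fun_prop

lemma logGrad_smul_smul (c : MixedCoeff n) (a b : ℝ) (m : ℂ) (s : S → ℂ) :
    logGrad c (a • m) (b • s) = (a * b) • logGrad c m s := by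
  ext i
  simp only [logGrad, Pi.smul_apply, real_smul, map_mul, conj_ofReal, ofReal_mul, mul_sum]
  refine sum_congr rfl fun p _ => ?_
  ring

lemma sum_mul_re_logGrad (c : MixedCoeff n) (m : ℂ) (s : S → ℂ) (w : Fin n → ℝ) :
    ∑ i, w i * (logGrad c m s i).re =
      ∑ p : S, (w ⬝ᵥ suppPt p) * (conj m * (c p * s p)).re := by
  simp only [logGrad, re_sum, mul_sum, dotProduct, suppPt, sum_mul]
  rw [sum_comm]
  refine sum_congr rfl fun p _ => sum_congr rfl fun i _ => ?_
  simp only [add_re, mul_re (Nat.cast _), natCast_re, natCast_im, zero_mul, sub_zero, conj_re,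
    Nat.cast_add]
  ring

/-! ### The closure of the monomial image of the torus -/

lemma exists_tendsto_of_tendsto_map {ι 𝕜 V W : Type*} [NontriviallyNormedField 𝕜]
    [CompleteSpace 𝕜] [AddCommGroup V] [Module 𝕜 V] [TopologicalSpace V]
    [IsTopologicalAddGroup V] [ContinuousSMul 𝕜 V] [AddCommGroup W] [Module 𝕜 W]
    [TopologicalSpace W] [IsTopologicalAddGroup W] [ContinuousSMul 𝕜 W] [T2Space W]
    [FiniteDimensional 𝕜 W] (Φ : V →ₗ[𝕜] W) {l : Filter ι} {x : ι → V} {y : W}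
    (h : Tendsto (fun k => Φ (x k)) l (nhds y)) :
    ∃ (b : ι → V) (b₀ : V), Tendsto b l (nhds b₀) ∧ ∀ k, Φ (b k) = Φ (x k) := by
  obtain ⟨g, hg⟩ := Φ.rangeRestrict.exists_rightInverse_of_surjective Φ.range_rangeRestrict
  obtain ⟨G, hG⟩ := g.exists_extend
  refine ⟨fun k => G (Φ (x k)), G y, (G.continuous_of_finiteDimensional.tendsto y).comp h,
    fun k => ?_⟩
  have hGx : G (Φ (x k)) = g (Φ.rangeRestrict (x k)) :=
    LinearMap.congr_fun hG (Φ.rangeRestrict (x k))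
  exact (congr_arg Φ hGx).trans
    (congr_arg Subtype.val (LinearMap.congr_fun hg (Φ.rangeRestrict (x k))))

lemma exists_tendsto_sub_dotProduct {ι κ P : Type*} [Fintype κ] [Finite P] {l : Filter ι}
    {x : ι → κ → ℝ} {e : P → κ → ℝ} {r : P → ℝ}
    (h : ∀ p, Tendsto (fun k => Real.exp (x k ⬝ᵥ e p)) l (nhds (r p))) :
    ∃ (b : ι → κ → ℝ) (b₀ : κ → ℝ), Tendsto b l (nhds b₀) ∧
      (∀ k p, r p ≠ 0 → (x k - b k) ⬝ᵥ e p = 0) ∧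
      ∀ᶠ k in l, ∀ p, r p = 0 → (x k - b k) ⬝ᵥ e p < 0 := by
  have := Fintype.ofFinite P
  have hlog (p : {p // r p ≠ 0}) : Tendsto (fun k => x k ⬝ᵥ e p) l (nhds (Real.log (r p))) := by
    simpa only [Real.log_exp] using (h p).log p.2
  obtain ⟨b, b₀, hb, hbx⟩ := exists_tendsto_of_tendsto_map
    (Matrix.vecMulLinear (Matrix.of fun i (p : {p // r p ≠ 0}) => e p i)) (tendsto_pi_nhds.2 hlog)
  refine ⟨b, b₀, hb, fun k p hp => ?_, ?_⟩
  · rw [sub_dotProduct]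
    exact sub_eq_zero.2 (congr_fun (hbx k) ⟨p, hp⟩).symm
  refine eventually_all.2 fun p => eventually_imp_distrib_left.2 fun hp => ?_
  have hx : Tendsto (fun k => x k ⬝ᵥ e p) l atBot :=
    Real.tendsto_exp_comp_nhds_zero.1 (hp ▸ h p)
  have hbp : Tendsto (fun k => b k ⬝ᵥ e p) l (nhds (b₀ ⬝ᵥ e p)) :=
    ((continuous_id.dotProduct continuous_const).tendsto b₀).comp hb
  filter_upwards [(hx.atBot_add hbp.neg).eventually_lt_atBot 0] with k hk
  rwa [sub_dotProduct, sub_eq_add_neg]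

/-- The point of the torus `(ℂ*)ⁿ` with logarithmic moduli `x` and phases `u`. -/
def polar (x : Fin n → ℝ) (u : Fin n → Circle) (i : Fin n) : ℂ := Real.exp (x i) * u i

lemma polar_ne_zero (x : Fin n → ℝ) (u : Fin n → Circle) (i : Fin n) : polar x u i ≠ 0 :=
  mul_ne_zero (ofReal_ne_zero.2 (Real.exp_ne_zero _)) (u i).coe_ne_zero

lemma continuous_polar :
    Continuous fun xu : (Fin n → ℝ) × (Fin n → Circle) => polar xu.1 xu.2 := by
  unfold polar
  fun_prop

lemma exists_eq_polar {z : Fin n → ℂ} (hz : ∀ i, z i ≠ 0) : ∃ x u, z = polar x u := by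
  refine ⟨fun i => Real.log ‖z i‖, fun i => Circle.exp (arg (z i)), funext fun i => ?_⟩
  rw [polar, Real.exp_log (norm_pos_iff.2 (hz i)), Circle.coe_exp, norm_mul_exp_arg_mul_I]

lemma monomial_polar (p : BiExponent n) (x : Fin n → ℝ) (u : Fin n → Circle) :
    monomial p (polar x u) =
      (Real.exp (x ⬝ᵥ suppPt p) : ℂ) * monomial p (fun i => (u i : ℂ)) :=
  monomial_exp_mul p x _

lemma norm_monomial_polar (p : BiExponent n) (x : Fin n → ℝ) (u : Fin n → Circle) :
    ‖monomial p (polar x u)‖ = Real.exp (x ⬝ᵥ suppPt p) := by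
  rw [monomial_polar, norm_mul, norm_monomial, norm_real, Real.norm_of_nonneg (Real.exp_nonneg _)]
  simp only [Circle.norm_coe, one_pow, prod_const_one, mul_one]

/-- The vector of values at `z` of the monomials with exponents in `S`. -/
def monomialVec (S : Finset (BiExponent n)) (z : Fin n → ℂ) : S → ℂ := fun p => monomial p z

lemma continuous_monomialVec (S : Finset (BiExponent n)) : Continuous (monomialVec S) :=
  continuous_pi fun p => continuous_monomial p.1

/-- The closure of the image of the torus `(ℂ*)ⁿ` under the monomials with exponents in `S`: the
analogue for mixed monomials of an affine toric variety. -/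
def toricClosure (S : Finset (BiExponent n)) : Set (S → ℂ) :=
  closure (Set.range fun xu : (Fin n → ℝ) × (Fin n → Circle) => monomialVec S (polar xu.1 xu.2))

lemma dense_torus : Dense {z : Fin n → ℂ | ∀ i, z i ≠ 0} := by
  have h := dense_pi Set.univ fun (_ : Fin n) _ => dense_compl_singleton (0 : ℂ)
  simpa only [Set.pi, Set.mem_univ, forall_const, Set.mem_compl_singleton_iff] using h

lemma monomialVec_mem_toricClosure (z : Fin n → ℂ) : monomialVec S z ∈ toricClosure S := by
  refine map_mem_closure (continuous_monomialVec S) (dense_torus z) fun y hy => ?_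
  obtain ⟨x, u, rfl⟩ := exists_eq_polar hy
  exact ⟨(x, u), rfl⟩

lemma smul_mem_toricClosure {q : Fin n → ℝ} (hq : ∀ p ∈ S, q ⬝ᵥ suppPt p = 1) {s : S → ℂ}
    (hs : s ∈ toricClosure S) {r : ℝ} (hr : 0 < r) : r • s ∈ toricClosure S := by
  refine map_mem_closure (continuous_const_smul r) hs ?_
  rintro _ ⟨⟨x, u⟩, rfl⟩
  refine ⟨(x + Real.log r • q, u), funext fun p => ?_⟩
  simp only [monomialVec, Pi.smul_apply, monomial_polar, add_dotProduct, smul_dotProduct,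
    hq p p.2, smul_eq_mul, mul_one, Real.exp_add, Real.exp_log hr, real_smul, ofReal_mul]
  ring

lemma exists_ultrafilter_tendsto_of_mem_closure_range {α X : Type*} [TopologicalSpace X]
    {f : α → X} {a : X} (ha : a ∈ closure (Set.range f)) :
    ∃ U : Ultrafilter α, Tendsto f U (nhds a) := by
  have : (comap f (nhds a)).NeBot :=
    comap_neBot_iff_frequently.2 (mem_closure_iff_frequently.1 ha)
  exact ⟨Ultrafilter.of _, tendsto_comap.mono_left (Ultrafilter.of_le _)⟩

-- Along the ultrafilter the phases converge by compactness, while the logarithmic moduli split into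
-- a convergent part `b`, which yields `a`, and a part `x - b` whose products with the exponents are
-- eventually zero or negative according to whether `s p ≠ 0`, which yields `w`.
lemma exists_face_of_tendsto_monomial_polar {ι : Type*} {U : Ultrafilter ι}
    {x : ι → Fin n → ℝ} {u : ι → Fin n → Circle} {s : S → ℂ}
    (h : ∀ p : S, Tendsto (fun k => monomial p (polar (x k) (u k))) U (nhds (s p))) :
    ∃ (a : Fin n → ℂ) (w : Fin n → ℝ), (∀ i, a i ≠ 0) ∧ ∀ p : S,
      w ⬝ᵥ suppPt p ≤ 0 ∧ s p = if w ⬝ᵥ suppPt p = 0 then monomial p a else 0 := by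
  have hnorm (p : S) : Tendsto (fun k => Real.exp (x k ⬝ᵥ suppPt p)) U (nhds ‖s p‖) :=
    (h p).norm.congr fun k => norm_monomial_polar p.1 (x k) (u k)
  obtain ⟨b, b₀, hb, hzero, hneg⟩ := exists_tendsto_sub_dotProduct hnorm
  obtain ⟨u₀, hu₀⟩ : ∃ u₀, Tendsto u U (nhds u₀) := ⟨_, (U.map u).le_nhds_lim⟩
  have hpolar : Tendsto (fun k => polar (b k) (u k)) U (nhds (polar b₀ u₀)) :=
    (continuous_polar.tendsto (b₀, u₀)).comp (hb.prodMk_nhds hu₀)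
  have hmono (p : S) (hp : s p ≠ 0) : s p = monomial p (polar b₀ u₀) := by
    have hlim : Tendsto (fun k => monomial p.1 (polar (b k) (u k))) U
        (nhds (monomial p.1 (polar b₀ u₀))) :=
      ((continuous_monomial p.1).tendsto (polar b₀ u₀)).comp hpolar
    refine tendsto_nhds_unique (h p) (hlim.congr fun k => ?_)
    have hk := hzero k p (norm_ne_zero_iff.2 hp)
    rw [sub_dotProduct, sub_eq_zero] at hk
    rw [monomial_polar, monomial_polar, hk]
  obtain ⟨k, hk⟩ := hneg.exists
  refine ⟨polar b₀ u₀, x k - b k, polar_ne_zero b₀ u₀, fun p => ?_⟩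
  by_cases hp : s p = 0
  · have hlt := hk p (norm_eq_zero.2 hp)
    exact ⟨hlt.le, by rw [hp, if_neg hlt.ne]⟩
  · have hw := hzero k p (norm_ne_zero_iff.2 hp)
    exact ⟨hw.le, by rw [if_pos hw, hmono p hp]⟩

lemma exists_face_of_mem_toricClosure {s : S → ℂ} (hs : s ∈ toricClosure S) :
    ∃ (a : Fin n → ℂ) (w : Fin n → ℝ), (∀ i, a i ≠ 0) ∧ ∀ p : S,
      w ⬝ᵥ suppPt p ≤ 0 ∧ s p = if w ⬝ᵥ suppPt p = 0 then monomial p a else 0 := by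
  obtain ⟨U, hU⟩ := exists_ultrafilter_tendsto_of_mem_closure_range hs
  exact exists_face_of_tendsto_monomial_polar (tendsto_pi_nhds.1 hU)

/-! ### Newton non-degeneracy -/

lemma dotProduct_le_of_mem_Gamma0 {c : MixedCoeff n} {w : Fin n → ℝ} {d : ℝ} (hd : 0 ≤ d)
    (hle : ∀ p ∈ c.support, w ⬝ᵥ suppPt p ≤ d) {x : Fin n → ℝ} (hx : x ∈ Gamma0 c) :
    w ⬝ᵥ x ≤ d := by
  have hsub : insert 0 (suppPts c) ⊆ {x | w ⬝ᵥ x ≤ d} := by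
    rintro _ (rfl | ⟨p, hp, rfl⟩)
    · simpa only [Set.mem_ofPred_eq, dotProduct_zero] using hd
    · exact hle p hp
  have hconv : Convex ℝ {x | w ⬝ᵥ x ≤ d} :=
    convex_halfSpace_le ⟨dotProduct_add w, fun r x => dotProduct_smul r w x⟩ d
  exact convexHull_min hsub hconv hx

lemma suppPt_mem_Gamma0 {c : MixedCoeff n} {p : BiExponent n} (hp : p ∈ c.support) :
    suppPt p ∈ Gamma0 c :=
  subset_convexHull ℝ _ (Set.mem_insert_of_mem _ ⟨p, hp, rfl⟩)

lemma isGammaPlusFace_of_forall_dotProduct_le {c : MixedCoeff n} {w : Fin n → ℝ} {d : ℝ}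
    (hd : 0 < d) (hle : ∀ p ∈ c.support, w ⬝ᵥ suppPt p ≤ d) {p₀ : BiExponent n}
    (hp₀ : p₀ ∈ c.support) (hw₀ : w ⬝ᵥ suppPt p₀ = d) :
    IsGammaPlusFace c {x ∈ Gamma0 c | w ⬝ᵥ x = d} := by
  refine ⟨⟨⟨suppPt p₀, suppPt_mem_Gamma0 hp₀, hw₀⟩, Or.inr ⟨-w, ?_⟩⟩, fun h => ?_⟩
  · ext x
    refine and_congr_right fun hx => ⟨fun hwx y hy => ?_, fun hmin => ?_⟩
    · change -w ⬝ᵥ x ≤ -w ⬝ᵥ y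
      rw [neg_dotProduct, neg_dotProduct, neg_le_neg_iff, hwx]
      exact dotProduct_le_of_mem_Gamma0 hd.le hle hy
    · have h₀ : -w ⬝ᵥ x ≤ -w ⬝ᵥ suppPt p₀ := hmin _ (suppPt_mem_Gamma0 hp₀)
      rw [neg_dotProduct, neg_dotProduct, neg_le_neg_iff, hw₀] at h₀
      exact (dotProduct_le_of_mem_Gamma0 hd.le hle hx).antisymm h₀
  · exact hd.ne (by simpa only [dotProduct_zero] using h.2)

lemma trunc_apply (c : MixedCoeff n) (Δ : Set (Fin n → ℝ)) (p : BiExponent n)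
    [Decidable (suppPt p ∈ Δ)] : trunc c Δ p = if suppPt p ∈ Δ then c p else 0 := by
  classical
  rw [trunc, Finsupp.filter_apply]
  congr

lemma support_trunc_subset (c : MixedCoeff n) (Δ : Set (Fin n → ℝ)) :
    (trunc c Δ).support ⊆ c.support := by
  classical
  intro p hp
  rw [Finsupp.mem_support_iff, trunc_apply] at hp
  exact Finsupp.mem_support_iff.2 (ite_ne_right_iff.1 hp).2

lemma logGrad_ne_zero {c : MixedCoeff n} {q : Fin n → ℝ}
    (hq : ∀ p ∈ c.support, q ⬝ᵥ suppPt p = 1) (hnd : NewtonStronglyNonDeg c) {m : ℂ} (hm : m ≠ 0)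
    {s : c.support → ℂ} (hs : s ∈ toricClosure c.support) (hs₀ : s ≠ 0) :
    logGrad c m s ≠ 0 := by
  classical
  intro hzero
  obtain ⟨a, w, ha, hw⟩ := exists_face_of_mem_toricClosure hs
  obtain ⟨p₀, hp₀⟩ := Function.ne_iff.1 hs₀
  have hadd (p : c.support) : (q + w) ⬝ᵥ suppPt p = 1 + w ⬝ᵥ suppPt p := by
    rw [add_dotProduct, hq p p.2]
  set Δ := {x ∈ Gamma0 c | (q + w) ⬝ᵥ x = 1} with hΔ
  have hface : IsGammaPlusFace c Δ := by
    refine isGammaPlusFace_of_forall_dotProduct_le one_pos (fun p hp => ?_) p₀.2 ?_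
    · linarith [hadd ⟨p, hp⟩, (hw ⟨p, hp⟩).1]
    · have hwp₀ : w ⬝ᵥ suppPt p₀ = 0 := by
        by_contra h
        exact hp₀ ((hw p₀).2.trans (if_neg h))
      rw [hadd, hwp₀, add_zero]
  have hterm (p : c.support) : trunc c Δ p * monomial p a = c p * s p := by
    have hmem : suppPt p ∈ Δ ↔ w ⬝ᵥ suppPt p = 0 := by
      simp only [hΔ, Set.mem_ofPred_eq, suppPt_mem_Gamma0 p.2, true_and, hadd, add_eq_left]
    rw [trunc_apply, (hw p).2, ite_mul, mul_ite, zero_mul, mul_zero]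
    simp only [hmem]
  refine hnd Δ hface a ha (mem_Sing_iff.2 ⟨m, hm, fun i => ?_⟩)
  have hcrit := conj_mul_reGrad (support_trunc_subset c Δ) m a i
  have hlog : logGrad (trunc c Δ) m (fun p : c.support => monomial p a) = logGrad c m s := by
    ext i
    simp only [logGrad, hterm]
  rw [hlog, hzero] at hcrit
  exact (mul_eq_zero.1 hcrit).resolve_left ((map_ne_zero _).2 (ha i))

-- By homogeneity it suffices to bound `‖logGrad c m s‖` below on a product of unit spheres, where
-- compactness applies: this is why the monomial image of the torus had to be closed up.
lemma exists_pos_mul_norm_le_norm_logGrad {c : MixedCoeff n} {q : Fin n → ℝ}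
    (hq : ∀ p ∈ c.support, q ⬝ᵥ suppPt p = 1) (hnd : NewtonStronglyNonDeg c) :
    ∃ C > 0, ∀ m, ∀ s ∈ toricClosure c.support, C * (‖m‖ * ‖s‖) ≤ ‖logGrad c m s‖ := by
  have hcompact : IsCompact
      (Metric.sphere (0 : ℂ) 1 ×ˢ (Metric.sphere 0 1 ∩ toricClosure c.support)) :=
    (isCompact_sphere 0 1).prod ((isCompact_sphere 0 1).inter_right isClosed_closure)
  obtain ⟨C, hC, hle⟩ := hcompact.exists_forall_le'
    (continuous_logGrad c).norm.continuousOn (a := 0) fun ms hms =>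
      norm_pos_iff.2 (logGrad_ne_zero hq hnd (ne_zero_of_mem_unit_sphere ⟨_, hms.1⟩) hms.2.2
        (ne_zero_of_mem_unit_sphere ⟨_, hms.2.1⟩))
  refine ⟨C, hC, fun m s hs => ?_⟩
  rcases eq_or_ne m 0 with rfl | hm
  · simp
  rcases eq_or_ne s 0 with rfl | hs₀
  · simp
  have hm' := norm_pos_iff.2 hm
  have hs' := norm_pos_iff.2 hs₀
  have hC' := hle (‖m‖⁻¹ • m, ‖s‖⁻¹ • s)
    ⟨by simp [hm], by simp [norm_smul, hs₀],
      smul_mem_toricClosure hq hs (inv_pos.2 hs')⟩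
  rw [logGrad_smul_smul, norm_smul, Real.norm_of_nonneg (by positivity), ← mul_inv,
    inv_mul_eq_div, le_div_iff₀ (mul_pos hm' hs')] at hC'
  exact hC'

/-- The `ℓ¹`-norm of the coefficients of a mixed polynomial. -/
def coeffNorm (c : MixedCoeff n) : ℝ := ∑ p : c.support, ‖c p‖

lemma coeffNorm_nonneg (c : MixedCoeff n) : 0 ≤ coeffNorm c := sum_nonneg fun _ _ => norm_nonneg _

lemma norm_eval_le (c : MixedCoeff n) (z : Fin n → ℂ) :
    ‖eval c z‖ ≤ coeffNorm c * ‖monomialVec c.support z‖ := by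
  rw [eval_eq_sum, coeffNorm, sum_mul]
  refine norm_sum_le_of_le _ fun p _ => ?_
  rw [norm_mul]
  gcongr
  exact norm_le_pi_norm (monomialVec c.support z) p

lemma eval_eq_zero_of_mem_Sing {c : MixedCoeff n} {q : Fin n → ℝ}
    (hq : ∀ p ∈ c.support, q ⬝ᵥ suppPt p = 1) (hnd : NewtonStronglyNonDeg c) {z : Fin n → ℂ}
    (hz : z ∈ Sing c) : eval c z = 0 := by
  obtain ⟨m, hm, hcrit⟩ := mem_Sing_iff.1 hz
  have hlog : logGrad c m (monomialVec c.support z) = 0 := funext fun i =>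
    (conj_mul_reGrad subset_rfl m z i).symm.trans (by rw [hcrit i, mul_zero, Pi.zero_apply])
  have hvec : monomialVec c.support z = 0 := by
    by_contra h
    exact logGrad_ne_zero hq hnd hm (monomialVec_mem_toricClosure z) h hlog
  simpa only [hvec, norm_zero, mul_zero, norm_le_zero_iff] using norm_eval_le c z

/-! ### Points of the Milnor set -/

lemma logGrad_eq_of_forall_mul_eq_reGrad {c : MixedCoeff n} {l : ℝ} {m : ℂ} {z : Fin n → ℂ}
    (h : ∀ i, (l : ℂ) * z i = reGrad c m z i) (i : Fin n) :
    logGrad c m (monomialVec c.support z) i = (l * ‖z i‖ ^ 2 : ℝ) := by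
  refine (conj_mul_reGrad subset_rfl m z i).symm.trans ?_
  rw [← h i, mul_left_comm, conj_mul', ofReal_mul, ofReal_pow]

lemma norm_logGrad_le_of_forall_mul_eq_reGrad {c : MixedCoeff n} {l : ℝ} {m : ℂ} {z : Fin n → ℂ}
    (h : ∀ i, (l : ℂ) * z i = reGrad c m z i) :
    ‖logGrad c m (monomialVec c.support z)‖ ≤ |l| * ‖z‖ ^ 2 := by
  refine (pi_norm_le_iff_of_nonneg (by positivity)).2 fun i => ?_
  rw [logGrad_eq_of_forall_mul_eq_reGrad h, norm_real, norm_mul, norm_pow, norm_norm,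
    Real.norm_eq_abs]
  gcongr
  exact norm_le_pi_norm z i

lemma mul_abs_log_sub_log_le {a b : ℝ} (ha : 0 ≤ a) (hab : a ≤ b) :
    a * |Real.log a - Real.log b| ≤ b := by
  rcases ha.eq_or_lt with rfl | ha
  · simpa only [zero_mul] using hab
  have hb := ha.trans_le hab
  have hlog := (Real.abs_log_mul_self_lt (a / b) (by positivity) ((div_le_one hb).2 hab)).le
  rwa [abs_mul, abs_of_pos (div_pos ha hb), Real.log_div ha.ne' hb.ne', mul_div_assoc',
    div_le_one hb, mul_comm] at hlog

lemma abs_dotProduct_sub_log_mul_re_le {p : BiExponent n} {z : Fin n → ℂ} {N : ℝ}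
    (hN : ‖monomial p z‖ ≤ N) (a : ℂ) :
    |((fun i => Real.log ‖z i‖) ⬝ᵥ suppPt p - Real.log N) * (a * monomial p z).re| ≤ ‖a‖ * N := by
  rcases eq_or_ne (monomial p z) 0 with h₀ | h₀
  · rw [h₀, mul_zero, zero_re, mul_zero, abs_zero]
    exact mul_nonneg (norm_nonneg a) ((norm_nonneg _).trans hN)
  rw [← log_norm_monomial h₀, abs_mul]
  calc |Real.log ‖monomial p z‖ - Real.log N| * |(a * monomial p z).re|
      ≤ |Real.log ‖monomial p z‖ - Real.log N| * (‖a‖ * ‖monomial p z‖) := by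
        gcongr
        exact (abs_re_le_norm _).trans_eq (norm_mul _ _)
    _ = ‖a‖ * (‖monomial p z‖ * |Real.log ‖monomial p z‖ - Real.log N|) := by ring
    _ ≤ ‖a‖ * N := by
        gcongr
        exact mul_abs_log_sub_log_le (norm_nonneg _) hN

-- Replacing each `log ‖monomial p z‖` by `log ‖monomialVec c.support z‖` turns the sum into a
-- multiple of `Re (conj m · f)`, at a cost controlled by `mul_abs_log_sub_log_le`.
lemma abs_sum_dotProduct_mul_re_le (c : MixedCoeff n) (m : ℂ) (z : Fin n → ℂ) :
    |∑ p : c.support, ((fun i => Real.log ‖z i‖) ⬝ᵥ suppPt p) *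
        (conj m * (c p * monomial p z)).re| ≤
      ‖m‖ * (coeffNorm c * ‖monomialVec c.support z‖ +
        |Real.log ‖monomialVec c.support z‖| * ‖eval c z‖) := by
  set N := ‖monomialVec c.support z‖
  have hterm (p : c.support) :
      |((fun i => Real.log ‖z i‖) ⬝ᵥ suppPt p - Real.log N) *
        (conj m * (c p * monomial p z)).re| ≤ ‖m‖ * (‖c p‖ * N) := by
    have hp := abs_dotProduct_sub_log_mul_re_le (norm_le_pi_norm (monomialVec c.support z) p)
      (conj m * c p)
    rwa [norm_mul, RCLike.norm_conj, mul_assoc, mul_assoc] at hp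
  have hre : |(conj m * eval c z).re| ≤ ‖m‖ * ‖eval c z‖ :=
    (abs_re_le_norm _).trans_eq (by rw [norm_mul, RCLike.norm_conj])
  have hsplit : ∑ p : c.support, ((fun i => Real.log ‖z i‖) ⬝ᵥ suppPt p) *
        (conj m * (c p * monomial p z)).re =
      ∑ p : c.support, ((fun i => Real.log ‖z i‖) ⬝ᵥ suppPt p - Real.log N) *
        (conj m * (c p * monomial p z)).re + Real.log N * (conj m * eval c z).re := by
    simp only [eval_eq_sum, mul_sum, re_sum, ← sum_add_distrib]
    exact sum_congr rfl fun p _ => by ring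
  rw [hsplit, mul_add, coeffNorm, sum_mul, mul_sum]
  refine (abs_add_le _ _).trans (add_le_add ((abs_sum_le_sum_abs _ _).trans
    (sum_le_sum fun p _ => hterm p)) ?_)
  rw [abs_mul, mul_left_comm]
  gcongr

lemma abs_mul_sum_log_norm_mul_sq_le {c : MixedCoeff n} {l : ℝ} {m : ℂ} {z : Fin n → ℂ}
    (h : ∀ i, (l : ℂ) * z i = reGrad c m z i) :
    |l| * |∑ i, Real.log ‖z i‖ * ‖z i‖ ^ 2| ≤
      ‖m‖ * (coeffNorm c * ‖monomialVec c.support z‖ +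
        |Real.log ‖monomialVec c.support z‖| * ‖eval c z‖) := by
  rw [← abs_mul]
  refine (congr_arg abs ?_).trans_le (abs_sum_dotProduct_mul_re_le c m z)
  refine Eq.trans ?_ (sum_mul_re_logGrad c m (monomialVec c.support z) _)
  simp only [logGrad_eq_of_forall_mul_eq_reGrad h, ofReal_re, mul_sum, mul_left_comm l]

lemma neg_one_le_log_mul_sq {t : ℝ} (ht : 0 ≤ t) : -1 ≤ Real.log t * t ^ 2 := by
  rcases ht.eq_or_lt with rfl | ht
  · norm_num
  calc -1 ≤ t ^ 2 - t := by nlinarith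
    _ = (1 - t⁻¹) * t ^ 2 := by field_simp
    _ ≤ Real.log t * t ^ 2 := by
      gcongr
      exact Real.one_sub_inv_le_log_of_pos ht

lemma log_norm_sub_card_mul_sq_le_sum {ι : Type*} [Fintype ι] {E : ι → Type*}
    [∀ i, SeminormedAddCommGroup (E i)] {z : ∀ i, E i} (hz : 1 ≤ ‖z‖) :
    (Real.log ‖z‖ - Fintype.card ι) * ‖z‖ ^ 2 ≤ ∑ i, Real.log ‖z i‖ * ‖z i‖ ^ 2 := by
  classical
  have : Nonempty ι := by
    by_contra h
    have := not_nonempty_iff.1 h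
    exact absurd hz (by rw [Subsingleton.elim z 0, norm_zero]; norm_num)
  obtain ⟨i, hmax⟩ := Finite.exists_max fun i => ‖z i‖
  have hi : ‖z i‖ = ‖z‖ :=
    (norm_le_pi_norm z i).antisymm ((pi_norm_le_iff_of_nonneg (norm_nonneg (z i))).2 hmax)
  have hrest : -(Fintype.card ι : ℝ) ≤ ∑ j ∈ univ.erase i, Real.log ‖z j‖ * ‖z j‖ ^ 2 :=
    calc -(Fintype.card ι : ℝ) ≤ ∑ j ∈ univ.erase i, (-1 : ℝ) := by
          simp
      _ ≤ _ := sum_le_sum fun j _ => neg_one_le_log_mul_sq (norm_nonneg (z j))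
  rw [← add_sum_erase _ _ (mem_univ i), hi]
  have hsq : (Fintype.card ι : ℝ) ≤ Fintype.card ι * ‖z‖ ^ 2 :=
    le_mul_of_one_le_right (Nat.cast_nonneg _) (one_le_pow₀ hz)
  linarith

lemma abs_log_le_add_inv {t : ℝ} (ht : 0 < t) : |Real.log t| ≤ t + t⁻¹ :=
  abs_le'.2 ⟨(Real.log_le_self ht.le).trans (le_add_of_nonneg_right (inv_nonneg.2 ht.le)),
    (neg_le.1 (Real.neg_inv_le_log ht.le)).trans (le_add_of_nonneg_left ht.le)⟩

lemma mul_add_abs_log_mul_le {L N F : ℝ} (hL : 0 ≤ L) (hF : 0 < F) (hN : 0 < N) (hFN : F ≤ L * N) :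
    L * N + |Real.log N| * F ≤ N * (L + F + L ^ 2 / F) := by
  have hFN' : N⁻¹ * F ≤ N * (L ^ 2 / F) := by
    rw [inv_mul_eq_div, ← mul_div_assoc, div_le_div_iff₀ hN hF]
    calc F * F ≤ (L * N) * (L * N) := by gcongr
      _ = N * L ^ 2 * N := by ring
  calc L * N + |Real.log N| * F ≤ L * N + (N + N⁻¹) * F := by
        gcongr
        exact abs_log_le_add_inv hN
    _ ≤ N * (L + F + L ^ 2 / F) := by linarith

lemma log_norm_le_of_mem_Milnor {c : MixedCoeff n} {C : ℝ} (hC₀ : 0 ≤ C)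
    (hC : ∀ m, ∀ s ∈ toricClosure c.support, C * (‖m‖ * ‖s‖) ≤ ‖logGrad c m s‖)
    {z : Fin n → ℂ} (hz : z ∈ Milnor c) (hz₁ : 1 ≤ ‖z‖) (hf : eval c z ≠ 0) :
    C * (Real.log ‖z‖ - n) ≤ coeffNorm c + ‖eval c z‖ + coeffNorm c ^ 2 / ‖eval c z‖ := by
  obtain ⟨l, m, hm, h⟩ := hz
  set N := ‖monomialVec c.support z‖
  have hF := norm_pos_iff.2 hf
  have hL := coeffNorm_nonneg c
  have hN : 0 < N := pos_of_mul_pos_right (hF.trans_le (norm_eval_le c z)) hL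
  rcases le_total (Real.log ‖z‖) n with hlog | hlog
  · refine (mul_nonpos_of_nonneg_of_nonpos hC₀ (sub_nonpos.2 hlog)).trans ?_
    positivity
  have hchain : ‖m‖ * N * (C * (Real.log ‖z‖ - n)) ≤
      ‖m‖ * N * (coeffNorm c + ‖eval c z‖ + coeffNorm c ^ 2 / ‖eval c z‖) :=
    calc ‖m‖ * N * (C * (Real.log ‖z‖ - n))
        = C * (‖m‖ * N) * (Real.log ‖z‖ - n) := by ring
      _ ≤ |l| * ‖z‖ ^ 2 * (Real.log ‖z‖ - n) := by
        refine mul_le_mul_of_nonneg_right ?_ (sub_nonneg.2 hlog)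
        exact (hC m _ (monomialVec_mem_toricClosure z)).trans
          (norm_logGrad_le_of_forall_mul_eq_reGrad h)
      _ = |l| * ((Real.log ‖z‖ - n) * ‖z‖ ^ 2) := by ring
      _ ≤ |l| * |∑ i, Real.log ‖z i‖ * ‖z i‖ ^ 2| := by
        gcongr
        refine le_trans ?_ (le_abs_self _)
        simpa only [Fintype.card_fin] using log_norm_sub_card_mul_sq_le_sum hz₁
      _ ≤ ‖m‖ * (coeffNorm c * N + |Real.log N| * ‖eval c z‖) :=
        abs_mul_sum_log_norm_mul_sq_le h
      _ ≤ ‖m‖ * (N * (coeffNorm c + ‖eval c z‖ + coeffNorm c ^ 2 / ‖eval c z‖)) := by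
        gcongr
        exact mul_add_abs_log_mul_le hL hF hN (norm_eval_le c z)
      _ = _ := (mul_assoc _ _ _).symm
  exact le_of_mul_le_mul_left hchain (mul_pos (norm_pos_iff.2 hm) hN)

lemma eq_zero_of_mem_Sset {c : MixedCoeff n} {q : Fin n → ℝ}
    (hq : ∀ p ∈ c.support, q ⬝ᵥ suppPt p = 1) (hnd : NewtonStronglyNonDeg c) {v : ℂ}
    (hv : v ∈ Sset c) : v = 0 := by
  by_contra hv₀
  obtain ⟨C, hC₀, hC⟩ := exists_pos_mul_norm_le_norm_logGrad hq hnd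
  obtain ⟨z, hz, hnorm, hval⟩ := hv
  have hle : ∀ᶠ k in atTop, C * (Real.log ‖z k‖ - n) ≤
      coeffNorm c + ‖eval c (z k)‖ + coeffNorm c ^ 2 / ‖eval c (z k)‖ := by
    filter_upwards [hnorm.eventually_ge_atTop 1, hval.eventually_ne hv₀] with k hk hne
    exact log_norm_le_of_mem_Milnor hC₀.le hC (hz k) hk hne
  have hlog : Tendsto (fun k => C * (Real.log ‖z k‖ - n)) atTop atTop :=
    (tendsto_atTop_add_const_right _ (-(n : ℝ))
      (Real.tendsto_log_atTop.comp hnorm)).const_mul_atTop hC₀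
  exact not_tendsto_nhds_of_tendsto_atTop (tendsto_atTop_mono' atTop hle hlog) _
    ((hval.norm.const_add (coeffNorm c)).add
      (tendsto_const_nhds.div hval.norm (norm_ne_zero_iff.2 hv₀)))

end Mixed

lemma RadialWeightedHom.exists_dotProduct_suppPt_eq_one {n : ℕ} {c : MixedCoeff n}
    (h : RadialWeightedHom c) :
    ∃ q : Fin n → ℝ, ∀ p ∈ c.support, q ⬝ᵥ Mixed.suppPt p = 1 := by
  obtain ⟨q, m, -, -, hm, hdeg⟩ := h
  refine ⟨(m : ℝ)⁻¹ • fun i => (q i : ℝ), fun p hp => ?_⟩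
  have hsum : (fun i => (q i : ℝ)) ⬝ᵥ Mixed.suppPt p = m := by
    rw [← hdeg p hp]
    simp only [dotProduct, Mixed.suppPt, Nat.cast_sum, Nat.cast_mul]
  rw [smul_dotProduct, hsum, smul_eq_mul, inv_mul_cancel₀ (Nat.cast_ne_zero.2 hm.ne')]

theorem Sset_union_critvals_subset_zero_general {n : ℕ} {c : MixedCoeff n} {q : Fin n → ℝ}
    (hq : ∀ p ∈ c.support, q ⬝ᵥ Mixed.suppPt p = 1) (hnd : Mixed.NewtonStronglyNonDeg c) :
    Mixed.Sset c ∪ Mixed.eval c '' Mixed.Sing c ⊆ {(0 : ℂ)} :=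
  Set.union_subset (fun _ hv => Mixed.eq_zero_of_mem_Sset hq hnd hv)
    (Set.image_subset_iff.2 fun _ hz => Mixed.eval_eq_zero_of_mem_Sing hq hnd hz)

/-- Corollary 4.5(2): a radial weighted-homogeneous Newton strongly
non-degenerate mixed polynomial has `S(f) ∪ f(Sing f) ⊆ {0}`. -/
theorem Sset_union_critvals_subset_zero {n : ℕ} (c : MixedCoeff n)
    (hsupp : c.support.Nonempty) (hwh : RadialWeightedHom c)
    (hnd : Mixed.NewtonStronglyNonDeg c) :
    Mixed.Sset c ∪ Mixed.eval c '' Mixed.Sing c ⊆ {(0 : ℂ)} := by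
  obtain ⟨q, hq⟩ := hwh.exists_dotProduct_suppPt_eq_one
  exact Sset_union_critvals_subset_zero_general hq hnd
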